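/- arXiv:hep-th/0205144 — 2 statements merged into one kernel-verified Lean document; each statement's English description precedes it below -/
import Mathlib

section
/- Let n ≥ 2. Every element of M_n is a finite sum (with repetitions allowed) of elements of S_n; i.e. S_n generates the additive monoid M_n. Explicitly, every v ∈ M_n can be written as v_0 copies of e_0, plus a sum of v_1 vectors of the form e_1 + w, plus a sum of v_2 vectors of the form e_2 + w, where each w has entries in {0,1} and vanishes on coordinates 0, 1 and 2. -/
/-- The `m`-th standard basis vector `e_m` of `ℤ^(n+2)` (coordinates indexed by `ℕ`,
vanishing outside `{0,…,n+1}`). -/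
def e (m : ℕ) : ℕ → ℤ := fun j => if j = m then 1 else 0

/-- The pairing `v·k = ∑_{m=0}^{n+1} v_m k_m` on `ℤ^(n+2)`. -/
def dot (n : ℕ) (v k : ℕ → ℤ) : ℤ := ∑ m ∈ Finset.range (n + 2), v m * k m

/-- `M_n`: the lattice points of the dual cone, namely all `v ∈ ℤ^(n+2)` with
`v_m ≥ 0` for every coordinate `m` and `v_1 + v_2 ≥ v_{i+1}` for every `i ∈ {2,…,n}`. -/
def Mset (n : ℕ) : Set (ℕ → ℤ) :=
  {v | (∀ m, 0 ≤ v m) ∧ (∀ m, n + 1 < m → v m = 0) ∧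
       (∀ i, 2 ≤ i → i ≤ n → v (i + 1) ≤ v 1 + v 2)}

/-- A zero-one vector in `ℤ^(n+2)` vanishing on coordinates `0`, `1` and `2`. -/
def ZeroOne (n : ℕ) (w : ℕ → ℤ) : Prop :=
  (∀ m, w m = 0 ∨ w m = 1) ∧ w 0 = 0 ∧ w 1 = 0 ∧ w 2 = 0 ∧
    ∀ m, n + 1 < m → w m = 0

/-- The candidate generating set `S_n`: the vector `e_0`, together with the vectors
`e_1 + w` and `e_2 + w` where `w` ranges over zero-one vectors vanishing on
coordinates `0`, `1`, `2`. -/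
def Sset (n : ℕ) : Set (ℕ → ℤ) :=
  {v | v = e 0 ∨ ∃ w, ZeroOne n w ∧ (v = e 1 + w ∨ v = e 2 + w)}

/-!
Slice the part of `v` supported on the coordinates `m ≥ 3` horizontally: the `k`-th layer is the
zero-one vector marking those `m ≥ 3` with `k < v m`. The cone inequalities say that `v` has height
at most `v 1 + v 2` there, so the layers `k < v 1 + v 2` add up to that part of `v`. Attaching the
first `v 1` layers to copies of `e 1` and the next `v 2` layers to copies of `e 2` leaves only the
copies of `e 0`.
-/

lemma sum_range_ite_lt_of_nonneg {z : ℤ} (hz : 0 ≤ z) (N : ℕ) :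
    ∑ k ∈ Finset.range N, (if (k : ℤ) < z then (1 : ℤ) else 0) = min (N : ℤ) z := by
  induction N with
  | zero => simpa using hz
  | succ N ih =>
    rw [Finset.sum_range_succ, ih]
    split_ifs <;> omega

/-- The `k`-th horizontal layer of `v` over the coordinates `m ≥ 3`, as a zero-one vector. Layers
are numbered from `0`, so coordinate `m` lies in the layers `k < v m`. -/
def layer (v : ℕ → ℤ) (k : ℕ) : ℕ → ℤ :=
  fun m => if 3 ≤ m ∧ (k : ℤ) < v m then 1 else 0

lemma zeroOne_layer {n : ℕ} {v : ℕ → ℤ} (hv : ∀ m, n + 1 < m → v m ≤ 0) (k : ℕ) :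
    ZeroOne n (layer v k) := by
  refine ⟨fun m => ?_, by simp [layer], by simp [layer], by simp [layer], fun m hm => ?_⟩
  · unfold layer
    split_ifs <;> simp
  · have hvm := hv m hm
    exact if_neg (by omega)

lemma sum_range_layer {v : ℕ → ℤ} {N : ℕ} (hv : ∀ m, 3 ≤ m → 0 ≤ v m ∧ v m ≤ N) :
    ∑ k ∈ Finset.range N, layer v k = (Set.Ici 3).indicator v := by
  funext m
  rw [Finset.sum_apply]
  by_cases hm : 3 ≤ m
  · obtain ⟨hnonneg, hle⟩ := hv m hm
    simp only [layer, hm, true_and, sum_range_ite_lt_of_nonneg hnonneg, min_eq_right hle,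
      Set.indicator_of_mem (Set.mem_Ici.mpr hm)]
  · simp [layer, hm]

/-- The vectors `e_c + w` with `w` running over the layers of `v` numbered by `I`, counted with
multiplicity. -/
def layerGenerators (c : ℕ) (v : ℕ → ℤ) (I : Finset ℕ) : Multiset (ℕ → ℤ) :=
  I.val.map fun k => e c + layer v k

lemma card_layerGenerators (c : ℕ) (v : ℕ → ℤ) (I : Finset ℕ) :
    (layerGenerators c v I).card = I.card :=
  Multiset.card_map _ _

lemma sum_layerGenerators (c : ℕ) (v : ℕ → ℤ) (I : Finset ℕ) :
    (layerGenerators c v I).sum = I.card • e c + ∑ k ∈ I, layer v k := by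
  rw [← Finset.sum_const, ← Finset.sum_add_distrib]
  rfl

lemma exists_zeroOne_of_mem_layerGenerators {n c : ℕ} {v : ℕ → ℤ} {I : Finset ℕ}
    (hv : ∀ m, n + 1 < m → v m ≤ 0) :
    ∀ u ∈ layerGenerators c v I, ∃ w, ZeroOne n w ∧ u = e c + w := by
  intro u hu
  obtain ⟨k, -, rfl⟩ := Multiset.mem_map.mp hu
  exact ⟨layer v k, zeroOne_layer hv k, rfl⟩

lemma eq_add_indicator_Ici_three (v : ℕ → ℤ) :
    v = v 0 • e 0 + v 1 • e 1 + v 2 • e 2 + (Set.Ici 3).indicator v := by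
  funext m
  match m with
  | 0 | 1 | 2 => simp [e]
  | m + 3 => simp [e]

lemma le_add_of_mem_Mset {n : ℕ} {v : ℕ → ℤ} (hv : v ∈ Mset n) {m : ℕ} (hm : 3 ≤ m) :
    v m ≤ v 1 + v 2 := by
  obtain ⟨hnonneg, hsupport, hcone⟩ := hv
  obtain hout | hin := lt_or_ge (n + 1) m
  · rw [hsupport m hout]
    exact add_nonneg (hnonneg 1) (hnonneg 2)
  · obtain ⟨i, rfl⟩ : ∃ i, m = i + 1 := ⟨m - 1, by omega⟩
    exact hcone i (by omega) (by omega)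

lemma eq_add_sum_layerGenerators {v : ℕ → ℤ} {a b : ℕ} (ha : v 1 = a) (hb : v 2 = b)
    (hv₀ : 0 ≤ v 0) (hv : ∀ m, 3 ≤ m → 0 ≤ v m ∧ v m ≤ v 1 + v 2) :
    v = (v 0).toNat • e 0 + (layerGenerators 1 v (Finset.range a)).sum +
      (layerGenerators 2 v (Finset.Ico a (a + b))).sum := by
  have hlayers : ∑ k ∈ Finset.range a, layer v k + ∑ k ∈ Finset.Ico a (a + b), layer v k =
      (Set.Ici 3).indicator v := by
    rw [Finset.sum_range_add_sum_Ico _ (Nat.le_add_right a b)]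
    exact sum_range_layer fun m hm => by simpa [ha, hb] using hv m hm
  calc v = v 0 • e 0 + v 1 • e 1 + v 2 • e 2 + (Set.Ici 3).indicator v :=
        eq_add_indicator_Ici_three v
    _ = (v 0).toNat • e 0 + a • e 1 + b • e 2 + (Set.Ici 3).indicator v := by
        rw [ha, hb, natCast_zsmul, natCast_zsmul, ← natCast_zsmul (e 0), Int.toNat_of_nonneg hv₀]
    _ = _ := by
        rw [sum_layerGenerators, sum_layerGenerators, Finset.card_range, Nat.card_Ico,
          Nat.add_sub_cancel_left, ← hlayers]
        abel

lemma multiset_sum_mem_closure_Sset {n c : ℕ} (hc : c = 1 ∨ c = 2) {L : Multiset (ℕ → ℤ)}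
    (hL : ∀ u ∈ L, ∃ w, ZeroOne n w ∧ u = e c + w) :
    L.sum ∈ AddSubmonoid.closure (Sset n) := by
  refine AddSubmonoid.multiset_sum_mem _ _ fun u hu => AddSubmonoid.subset_closure ?_
  obtain ⟨w, hw, rfl⟩ := hL u hu
  exact Or.inr ⟨w, hw, hc.imp (by rintro rfl; rfl) (by rintro rfl; rfl)⟩

/-- `S_n` generates the additive monoid `M_n`: every `v ∈ M_n` is a finite
sum of elements of `S_n`; explicitly, `v` is `v_0` copies of `e_0`, plus a sum of `v_1`
vectors of the form `e_1 + w`, plus a sum of `v_2` vectors of the form `e_2 + w`. -/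
theorem statement2 (n : ℕ) (hn : 2 ≤ n) :
    ∀ v ∈ Mset n,
      v ∈ AddSubmonoid.closure (Sset n) ∧
      ∃ L₁ L₂ : Multiset (ℕ → ℤ),
        (L₁.card : ℤ) = v 1 ∧ (L₂.card : ℤ) = v 2 ∧
        (∀ u ∈ L₁, ∃ w, ZeroOne n w ∧ u = e 1 + w) ∧
        (∀ u ∈ L₂, ∃ w, ZeroOne n w ∧ u = e 2 + w) ∧
        v = (v 0).toNat • e 0 + L₁.sum + L₂.sum := by
  intro v hv
  obtain ⟨a, ha⟩ := Int.eq_ofNat_of_zero_le (hv.1 1)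
  obtain ⟨b, hb⟩ := Int.eq_ofNat_of_zero_le (hv.1 2)
  have hsupport : ∀ m, n + 1 < m → v m ≤ 0 := fun m hm => (hv.2.1 m hm).le
  have hdecomp := eq_add_sum_layerGenerators ha hb (hv.1 0)
    fun m hm => ⟨hv.1 m, le_add_of_mem_Mset hv hm⟩
  have hgen₁ := exists_zeroOne_of_mem_layerGenerators (c := 1) (I := Finset.range a) hsupport
  have hgen₂ := exists_zeroOne_of_mem_layerGenerators (c := 2) (I := Finset.Ico a (a + b)) hsupport
  refine ⟨?_, _, _, ?_, ?_, hgen₁, hgen₂, hdecomp⟩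
  · have he₀ : e 0 ∈ AddSubmonoid.closure (Sset n) := AddSubmonoid.subset_closure (Or.inl rfl)
    rw [hdecomp]
    exact add_mem (add_mem (nsmul_mem he₀ _) (multiset_sum_mem_closure_Sset (Or.inl rfl) hgen₁))
      (multiset_sum_mem_closure_Sset (Or.inr rfl) hgen₂)
  · rw [card_layerGenerators, Finset.card_range, ha]
  · rw [card_layerGenerators, Nat.card_Ico, Nat.add_sub_cancel_left, hb]
end

section
/- Let n ≥ 2. Every element s of S_n is irreducible in the monoid M_n: s ≠ 0, and whenever s = a + b with a, b ∈ M_n, either a = 0 or b = 0. -/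
/-!
The functional `v ↦ v₀ + v₁ + v₂` is additive, nonnegative on `M_n`, and vanishes there only at `0`:
the inequalities `0 ≤ v_{i+1} ≤ v₁ + v₂` kill the remaining coordinates. It takes the value `1` on
`S_n`, and `1` is not a sum of two positive integers.
-/

theorem eq_zero_or_eq_zero_of_map_add_eq_one {A : Type*} [AddZeroClass A] {M : Set A} (f : A →+ ℤ)
    (map_nonneg : ∀ v ∈ M, 0 ≤ f v) (eq_zero_of_map_eq_zero : ∀ v ∈ M, f v = 0 → v = 0)
    {a b : A} (ha : a ∈ M) (hb : b ∈ M) (hab : f (a + b) = 1) : a = 0 ∨ b = 0 := by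
  have hsum : f a + f b = 1 := by rw [← map_add, hab]
  have hfa := map_nonneg a ha
  have hfb := map_nonneg b hb
  have hzero : f a = 0 ∨ f b = 0 := by lia
  exact hzero.imp (eq_zero_of_map_eq_zero a ha) (eq_zero_of_map_eq_zero b hb)

/-- The degree `v₀ + v₁ + v₂` of a vector `v`, as an additive map; it is the grading of `M_n` in
which the elements of `S_n` have degree one. -/
def degree : (ℕ → ℤ) →+ ℤ :=
  let coord := Pi.evalAddMonoidHom fun _ : ℕ => ℤ
  coord 0 + coord 1 + coord 2

theorem degree_apply (v : ℕ → ℤ) : degree v = v 0 + v 1 + v 2 := rfl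

theorem degree_e {m : ℕ} (hm : m ≤ 2) : degree (e m) = 1 := by
  interval_cases m <;> simp [degree_apply, e]

section

variable {n : ℕ} {v : ℕ → ℤ}

theorem degree_eq_zero_of_zeroOne (hv : ZeroOne n v) : degree v = 0 := by
  obtain ⟨-, hv0, hv1, hv2, -⟩ := hv
  simp [degree_apply, hv0, hv1, hv2]

theorem degree_eq_one_of_mem_Sset (hv : v ∈ Sset n) : degree v = 1 := by
  rcases hv with rfl | ⟨w, hw, rfl | rfl⟩
  · exact degree_e (by decide)
  · rw [map_add, degree_e (by decide), degree_eq_zero_of_zeroOne hw, add_zero]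
  · rw [map_add, degree_e le_rfl, degree_eq_zero_of_zeroOne hw, add_zero]

theorem degree_nonneg_of_mem_Mset (hv : v ∈ Mset n) : 0 ≤ degree v :=
  add_nonneg (add_nonneg (hv.1 0) (hv.1 1)) (hv.1 2)

theorem le_degree_of_mem_Mset (hv : v ∈ Mset n) (m : ℕ) : v m ≤ degree v := by
  obtain ⟨nonneg, eq_zero_of_lt, le_add⟩ := hv
  have h0 := nonneg 0
  have h1 := nonneg 1
  have h2 := nonneg 2
  rw [degree_apply]
  match m with
  | 0 | 1 | 2 => lia
  | k + 3 =>
    rcases lt_or_ge (n + 1) (k + 3) with hlt | hle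
    · rw [eq_zero_of_lt _ hlt]
      positivity
    · have hk : v (k + 3) ≤ v 1 + v 2 := le_add (k + 2) (by lia) (by lia)
      lia

theorem eq_zero_of_mem_Mset_of_degree_eq_zero (hv : v ∈ Mset n) (hdeg : degree v = 0) : v = 0 :=
  funext fun m => le_antisymm ((le_degree_of_mem_Mset hv m).trans_eq hdeg) (hv.1 m)

end

/-- every element `s` of `S_n` is irreducible in the monoid `M_n`:
`s ≠ 0`, and whenever `s = a + b` with `a, b ∈ M_n`, either `a = 0` or `b = 0`. -/
theorem statement3 (n : ℕ) (hn : 2 ≤ n) :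
    ∀ s ∈ Sset n, s ≠ 0 ∧
      ∀ a ∈ Mset n, ∀ b ∈ Mset n, s = a + b → a = 0 ∨ b = 0 := by
  intro s hs
  have hdeg : degree s = 1 := degree_eq_one_of_mem_Sset hs
  constructor
  · rintro rfl
    simp at hdeg
  · rintro a ha b hb rfl
    exact eq_zero_or_eq_zero_of_map_add_eq_one degree (fun _ => degree_nonneg_of_mem_Mset)
      (fun _ => eq_zero_of_mem_Mset_of_degree_eq_zero) ha hb hdeg
end
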